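/- Given covariants q = (q_i) of order d and contravariants p = (p_i) of order d of Sym^{kd}(W*), both forming bases of their spaces when evaluated at f, with pairing matrix M_{p,q} = (D(p_i, q_j))_{i,j}, the dual basis of (p_i(f)) under the apolarity pairing is given by the tuple (p_i(f)*)_i = M_{p,q}^{-1}·(q_j(f))_j. Consequently, setting f̃_{p,q} = ∑ D(p_{i₁}(f)⋯p_{i_k}(f), f) X_{i₁}⋯X_{i_k}, one has f̃_{p,q}(p₀(f)*,…,p_r(f)*) = ((kd)!/d!^k)·f. -/

import Mathlib

open MvPolynomial Matrix

noncomputable section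

def derivOp (K : Type*) [Field K] {σ : Type*} [Fintype σ] [DecidableEq σ]
    (a : σ →₀ ℕ) : Module.End K (MvPolynomial σ K) :=
  (Finset.univ.toList.map fun j : σ => ((MvPolynomial.pderiv j).toLinearMap ^ (a j))).prod

def apol {K : Type*} [Field K] {σ : Type*} [Fintype σ] [DecidableEq σ]
    (u P : MvPolynomial σ K) : MvPolynomial σ K :=
  ∑ a ∈ u.support, u.coeff a • derivOp K a P

def apolS {K : Type*} [Field K] {σ : Type*} [Fintype σ] [DecidableEq σ]
    (u P : MvPolynomial σ K) : K :=
  MvPolynomial.constantCoeff (apol u P)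

def MonIdx (m d : ℕ) : Type := {v : Fin m → ℕ // v ∈ Finset.Nat.antidiagonalTuple m d}

instance (m d : ℕ) : Fintype (MonIdx m d) := by unfold MonIdx; infer_instance
instance (m d : ℕ) : DecidableEq (MonIdx m d) := by unfold MonIdx; infer_instance

open scoped TensorProduct

section Apolarity

variable {K : Type*} [Field K] {σ : Type*}

lemma coeff_pderiv_pow (j : σ) (m : ℕ) (b : σ →₀ ℕ) (P : MvPolynomial σ K) :
    coeff b (((pderiv j).toLinearMap ^ m) P)
      = coeff (b + Finsupp.single j m) P * ((b j + 1).ascFactorial m : K) := by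
  induction m generalizing b with
  | zero => simp
  | succ m ih =>
    rw [pow_succ', Module.End.mul_apply, Derivation.coeFn_coe, coeff_pderiv, ih, add_assoc,
      ← Finsupp.single_add, add_comm 1 m, mul_assoc]
    congr 1
    have h : (b j + 1) * (b j + 1 + 1).ascFactorial m = (b j + 1).ascFactorial (m + 1) := by
      rw [Nat.ascFactorial_succ, ← Nat.succ_ascFactorial]
    rw [← h]
    push_cast
    simp [mul_comm]

lemma coeff_list_prod_pderiv_pow (a : σ →₀ ℕ) (P : MvPolynomial σ K) (L : List σ) (hL : L.Nodup)
    (b : σ →₀ ℕ) (hb : ∀ j ∈ L, b j = 0) :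
    coeff b ((L.map fun j => (pderiv j).toLinearMap ^ a j).prod P)
      = coeff (b + (L.map fun j => Finsupp.single j (a j)).sum) P
        * (L.map fun j => ((a j).factorial : K)).prod := by
  induction L generalizing b with
  | nil => simp
  | cons j L ih =>
    obtain ⟨hj, hL⟩ := List.nodup_cons.1 hL
    have hb' : ∀ i ∈ L, (b + Finsupp.single j (a j)) i = 0 := fun i hi => by
      have hij : j ≠ i := fun h => hj (h ▸ hi)
      simp [hb i (List.mem_cons_of_mem _ hi), Finsupp.single_eq_of_ne hij.symm]
    rw [List.map_cons, List.prod_cons, Module.End.mul_apply, coeff_pderiv_pow, ih hL _ hb',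
      hb j List.mem_cons_self]
    simp [add_assoc, Nat.one_ascFactorial]
    ring

lemma prod_tmul_prod {ι : Type*} (s : Finset ι) (u w : ι → MvPolynomial σ K) :
    ∏ i ∈ s, u i ⊗ₜ[K] w i = (∏ i ∈ s, u i) ⊗ₜ[K] (∏ i ∈ s, w i) := by
  classical
  induction s using Finset.induction_on with
  | empty => simp [Algebra.TensorProduct.one_def]
  | insert i s hi ih => simp [Finset.prod_insert hi, ih]

variable [Fintype σ]

/-- The apolarity pairing as a bilinear form. -/
def apolForm (K : Type*) [Field K] (σ : Type*) [Fintype σ] :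
    MvPolynomial σ K →ₗ[K] MvPolynomial σ K →ₗ[K] K :=
  (basisMonomials σ K).constr K fun a => (∏ j, ((a j).factorial : K)) • lcoeff K a

lemma apolForm_monomial_left (a : σ →₀ ℕ) (P : MvPolynomial σ K) :
    apolForm K σ (monomial a 1) P = (∏ j, ((a j).factorial : K)) * coeff a P := by
  have h := (basisMonomials σ K).constr_basis K
    (fun a => (∏ j, ((a j).factorial : K)) • lcoeff K a) a
  rw [coe_basisMonomials] at h
  rw [apolForm, h]
  simp

/-- The contraction `u ⊗ w ↦ D(u, f) w` of the left factor against `f`. -/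
def apolContract (f : MvPolynomial σ K) :
    MvPolynomial σ K ⊗[K] MvPolynomial σ K →ₗ[K] MvPolynomial σ K :=
  TensorProduct.lift
    ((LinearMap.lsmul K (MvPolynomial σ K)).comp ((apolForm K σ).flip f))

lemma apolContract_tmul (f u w : MvPolynomial σ K) :
    apolContract f (u ⊗ₜ[K] w) = apolForm K σ u f • w := by
  simp [apolContract]

variable [DecidableEq σ]

lemma constantCoeff_derivOp (a : σ →₀ ℕ) (P : MvPolynomial σ K) :
    constantCoeff (derivOp K a P) = coeff a P * ∏ j, ((a j).factorial : K) := by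
  rw [constantCoeff_eq, derivOp,
    coeff_list_prod_pderiv_pow a P _ (Finset.nodup_toList _) 0 (by simp), Finset.sum_map_toList,
    Finset.prod_map_toList, Finsupp.univ_sum_single, zero_add]

lemma apolS_eq_apolForm (u P : MvPolynomial σ K) : apolS u P = apolForm K σ u P := by
  have hu : apolForm K σ u
      = ∑ a ∈ u.support, u.coeff a • (∏ j, ((a j).factorial : K)) • lcoeff K a :=
    Module.Basis.constr_apply ..
  rw [hu, apolS, apol]
  simp [constantCoeff_derivOp, mul_comm]

lemma apolForm_monomial_right (u : MvPolynomial σ K) (a : σ →₀ ℕ) :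
    apolForm K σ u (monomial a 1) = (∏ j, ((a j).factorial : K)) * coeff a u := by
  induction u using MvPolynomial.induction_on' with
  | add p q hp hq => rw [map_add, LinearMap.add_apply, hp, hq, coeff_add, mul_add]
  | monomial b c =>
    have hbc : monomial b c = c • monomial b (1 : K) := by simp [smul_monomial]
    rw [hbc, map_smul, LinearMap.smul_apply, apolForm_monomial_left]
    by_cases h : b = a
    · subst h
      simp [mul_comm]
    · simp [coeff_monomial, h, Ne.symm h]

lemma MvPolynomial.IsHomogeneous.eq_sum_piAntidiag {m : ℕ} {g : MvPolynomial σ K}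
    (hg : g.IsHomogeneous m) :
    g = ∑ v ∈ Finset.piAntidiag Finset.univ m,
      coeff (Finsupp.equivFunOnFinite.symm v) g •
        monomial (Finsupp.equivFunOnFinite.symm v) (1 : K) := by
  ext b
  simp only [coeff_sum, coeff_smul, coeff_monomial, smul_eq_mul, mul_ite, mul_one, mul_zero]
  by_cases hb : coeff b g = 0
  · rw [hb, Finset.sum_eq_zero]
    intro v _
    split_ifs with h
    · rw [h, hb]
    · rfl
  · have hdeg := hg hb
    rw [Finset.sum_eq_single (b : σ → ℕ)]
    · simp
    · intro v _ hv
      rw [if_neg]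
      rintro rfl
      exact hv (by simp)
    · intro h
      refine absurd ?_ h
      simpa [Finsupp.weight_apply, Finsupp.sum_fintype] using hdeg

lemma sum_X_tmul_X_pow (m : ℕ) :
    (∑ j : σ, (X j : MvPolynomial σ K) ⊗ₜ[K] (X j : MvPolynomial σ K)) ^ m
      = ∑ v ∈ Finset.piAntidiag Finset.univ m,
        monomial (Finsupp.equivFunOnFinite.symm v) (1 : K) ⊗ₜ[K]
          ((Nat.multinomial Finset.univ v : K) •
            monomial (Finsupp.equivFunOnFinite.symm v) (1 : K)) := by
  rw [Finset.sum_pow_eq_sum_piAntidiag]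
  refine Finset.sum_congr rfl fun v _ => ?_
  have hmon : monomial (Finsupp.equivFunOnFinite.symm v) (1 : K) = ∏ j, X j ^ v j := by
    rw [monomial_eq, Finsupp.prod_fintype _ _ (by simp)]
    simp
  have hprod : ∏ j : σ, ((X j : MvPolynomial σ K) ⊗ₜ[K] (X j : MvPolynomial σ K)) ^ v j
      = (∏ j, X j ^ v j) ⊗ₜ[K] (∏ j, X j ^ v j) := by
    simp_rw [Algebra.TensorProduct.tmul_pow]
    exact prod_tmul_prod ..
  rw [hprod, hmon, TensorProduct.tmul_smul, ← nsmul_eq_mul, Nat.cast_smul_eq_nsmul]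

lemma multinomial_mul_prod_factorial {m : ℕ} {v : σ → ℕ}
    (hv : v ∈ Finset.piAntidiag Finset.univ m) :
    (Nat.multinomial Finset.univ v : K) * ∏ j, ((v j).factorial : K) = (m.factorial : K) := by
  have hsum : ∑ j, v j = m := (Finset.mem_piAntidiag.1 hv).1
  rw [← hsum, ← Nat.multinomial_spec Finset.univ v]
  push_cast
  ring

lemma sum_X_tmul_X_pow_eq_factorial_smul {ι : Type*} [Fintype ι] {d : ℕ}
    {p e : ι → MvPolynomial σ K} (hp : ∀ i, (p i).IsHomogeneous d)
    (he : ∀ g : MvPolynomial σ K, g.IsHomogeneous d → ∑ i, apolForm K σ (p i) g • e i = g) :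
    (∑ j : σ, (X j : MvPolynomial σ K) ⊗ₜ[K] (X j : MvPolynomial σ K)) ^ d
      = (d.factorial : K) • ∑ i, p i ⊗ₜ[K] e i := by
  have hexp : ∑ i, p i ⊗ₜ[K] e i = ∑ v ∈ Finset.piAntidiag Finset.univ d,
      monomial (Finsupp.equivFunOnFinite.symm v) (1 : K) ⊗ₜ[K]
        ∑ i, coeff (Finsupp.equivFunOnFinite.symm v) (p i) • e i := by
    simp_rw [TensorProduct.tmul_sum, TensorProduct.tmul_smul]
    rw [Finset.sum_comm]
    refine Finset.sum_congr rfl fun i _ => ?_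
    conv_lhs => rw [(hp i).eq_sum_piAntidiag]
    rw [TensorProduct.sum_tmul]
    rfl
  rw [hexp, sum_X_tmul_X_pow, Finset.smul_sum]
  refine Finset.sum_congr rfl fun v hv => ?_
  rw [← TensorProduct.tmul_smul]
  congr 1
  have hhom : (monomial (Finsupp.equivFunOnFinite.symm v) (1 : K)).IsHomogeneous d := by
    apply isHomogeneous_monomial
    simpa [Finsupp.degree_eq_sum] using hv
  conv_lhs => rw [← he _ hhom]
  simp_rw [apolForm_monomial_right, mul_smul, ← Finset.smul_sum]
  rw [smul_smul]
  congr 1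
  simpa using multinomial_mul_prod_factorial hv

lemma apolContract_sum_X_tmul_X_pow {m : ℕ} {f : MvPolynomial σ K} (hf : f.IsHomogeneous m) :
    apolContract f ((∑ j : σ, (X j : MvPolynomial σ K) ⊗ₜ[K] (X j : MvPolynomial σ K)) ^ m)
      = (m.factorial : K) • f := by
  conv_rhs => rw [hf.eq_sum_piAntidiag]
  rw [sum_X_tmul_X_pow, map_sum, Finset.smul_sum]
  refine Finset.sum_congr rfl fun v hv => ?_
  rw [apolContract_tmul, apolForm_monomial_left, smul_smul, smul_smul,
    ← multinomial_mul_prod_factorial hv]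
  congr 1
  simp
  ring

lemma factorial_pow_smul_sum_apolForm_prod {ι : Type*} [Fintype ι] {d k : ℕ}
    {p e : ι → MvPolynomial σ K} (hp : ∀ i, (p i).IsHomogeneous d)
    (he : ∀ g : MvPolynomial σ K, g.IsHomogeneous d → ∑ i, apolForm K σ (p i) g • e i = g)
    {f : MvPolynomial σ K} (hf : f.IsHomogeneous (k * d)) :
    (d.factorial : K) ^ k •
        ∑ t : Fin k → ι, apolForm K σ (∏ l, p (t l)) f • ∏ l, e (t l)
      = ((k * d).factorial : K) • f := by
  classical
  rw [← apolContract_sum_X_tmul_X_pow hf, mul_comm k d, pow_mul,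
    sum_X_tmul_X_pow_eq_factorial_smul hp he, smul_pow, map_smul, Finset.sum_pow',
    Fintype.piFinset_univ, map_sum]
  congr 1
  refine Finset.sum_congr rfl fun t _ => ?_
  rw [prod_tmul_prod, apolContract_tmul]

end Apolarity

/-- given evaluated covariants `qf = (qᵢ(f)) ⊂ Sym^d(W*)` and
contravariants `pf = (pᵢ(f)) ⊂ Sym^d(W)`, both bases, with pairing matrix
`M = (D(pᵢ, qⱼ))`, the dual basis of `(pᵢ(f))` under the apolarity pairing is
`pⱼ* = ∑_l (M⁻¹)_{l j} q_l` (i.e. the tuple `M⁻¹·(qⱼ)ⱼ`), and consequently, for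
`f ∈ Sym^{kd}(W*)`, the form
`f̃ = ∑ D(p_{i₁}⋯p_{i_k}, f) X_{i₁}⋯X_{i_k}` satisfies
`f̃(p₀*,…,p_r*) = ((kd)!/d!^k)·f`. -/
theorem dual_basis_and_reconstruction_via_pairing_matrix
    (K : Type*) [Field K] (n d k : ℕ) (hd : 1 ≤ d) (hk : 1 ≤ k)
    (hchar : ∀ i : ℕ, 0 < i → i ≤ k * d → (i : K) ≠ 0)
    (pf qf : MonIdx (n + 1) d → MvPolynomial (Fin (n + 1)) K)
    (hpf : ∀ i, (pf i).IsHomogeneous d) (hqf : ∀ j, (qf j).IsHomogeneous d)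
    (hqspan : Submodule.span K (Set.range qf) = homogeneousSubmodule (Fin (n + 1)) K d)
    (hM : IsUnit (Matrix.of fun i j => apolS (pf i) (qf j)).det)
    (f : MvPolynomial (Fin (n + 1)) K) (hf : f.IsHomogeneous (k * d)) :
    (∀ i j, apolS (pf i)
        (∑ l, (Matrix.of fun i' j' => apolS (pf i') (qf j'))⁻¹ l j • qf l)
      = if i = j then 1 else 0)
    ∧ ∑ t : Fin k → MonIdx (n + 1) d,
        apolS (∏ l, pf (t l)) f •
          ∏ l, (∑ a, (Matrix.of fun i' j' => apolS (pf i') (qf j'))⁻¹ a (t l) • qf a)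
      = ((Nat.factorial (k * d) : K) / (Nat.factorial d : K) ^ k) • f := by
  have hMinv := Matrix.mul_nonsing_inv _ hM
  have hinvM := Matrix.nonsing_inv_mul _ hM
  simp only [apolS_eq_apolForm] at hMinv hinvM ⊢
  set M : Matrix (MonIdx (n + 1) d) (MonIdx (n + 1) d) K :=
    Matrix.of fun i j => apolForm K (Fin (n + 1)) (pf i) (qf j) with hMdef
  refine ⟨fun i j => ?_, ?_⟩
  · have h := congrFun (congrFun hMinv i) j
    rw [Matrix.mul_apply, Matrix.one_apply] at h
    rw [← h, map_sum]
    refine Finset.sum_congr rfl fun l _ => ?_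
    rw [map_smul, smul_eq_mul, mul_comm, hMdef, Matrix.of_apply]
  · have he : ∀ g : MvPolynomial (Fin (n + 1)) K, g.IsHomogeneous d →
        ∑ i, apolForm K (Fin (n + 1)) (pf i) g • ∑ a, M⁻¹ a i • qf a = g := by
      intro g hg
      have hg' : g ∈ Submodule.span K (Set.range qf) := by
        rw [hqspan]
        exact hg
      obtain ⟨c, rfl⟩ := (Submodule.mem_span_range_iff_exists_fun K).1 hg'
      have hq : ∀ j, ∑ i, M i j • ∑ a, M⁻¹ a i • qf a = qf j := by
        intro j
        simp_rw [Finset.smul_sum, smul_smul]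
        rw [Finset.sum_comm]
        simp_rw [← Finset.sum_smul, mul_comm (M _ j), ← Matrix.mul_apply, hinvM,
          Matrix.one_apply, ite_smul, one_smul, zero_smul]
        simp
      simp_rw [map_sum, map_smul, Finset.sum_smul]
      rw [Finset.sum_comm]
      refine Finset.sum_congr rfl fun j _ => ?_
      conv_rhs => rw [← hq j]
      simp [Finset.smul_sum, smul_smul, hMdef, mul_assoc]
    have hfac : (d.factorial : K) ^ k ≠ 0 := by
      refine pow_ne_zero _ ?_
      rw [← Finset.prod_range_add_one_eq_factorial]
      push_cast
      refine Finset.prod_ne_zero_iff.2 fun i hi => ?_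
      have hle : i + 1 ≤ k * d :=
        (Nat.succ_le_of_lt (Finset.mem_range.1 hi)).trans (Nat.le_mul_of_pos_left d hk)
      exact_mod_cast hchar (i + 1) i.succ_pos hle
    have hmain := factorial_pow_smul_sum_apolForm_prod hpf he hf
    rw [div_eq_inv_mul, mul_smul, ← hmain, smul_smul, inv_mul_cancel₀ hfac, one_smul]
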